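/- Let ((n_1, K, d_1))_{D_1} and ((n_2, K, d_2))_{D_2} be two QMDS codes with the same code-space dimension K > 1, and set r_1 = d_1 − 1, r_2 = d_2 − 1. Then for any integers α, β with 0 ≤ α ≤ r_1 and 0 ≤ β ≤ r_2, there exists an l-uniform subspace W of (C^{D_1})^{⊗(n_1−α)} ⊗ (C^{D_2})^{⊗(n_2−β)} with dim(W) = D_1^α · D_2^β and l = min(n_1 − r_1 − α, n_2 − r_2 − β, r_1 + r_2 + 1 − α − β). -/

import Mathlib

/-!
Common definitions: multipartite systems with parties indexed by a finite type `ι`,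
local dimensions `d : ι → ℕ`, vectors as functions on the configuration space,
partial traces, and `r`-uniform states and subspaces.
-/

open scoped ComplexConjugate Matrix

namespace RUnif

variable {ι : Type} [Fintype ι] [DecidableEq ι]

/-- Configuration space (computational basis index set) of the multipartite system
`ℂ^{d i₁} ⊗ ... ⊗ ℂ^{d iₙ}`. -/
abbrev Cfg (d : ι → ℕ) : Type := ∀ i, Fin (d i)

/-- The multipartite Hilbert space `ℂ^{d i₁} ⊗ ... ⊗ ℂ^{d iₙ}`, realized as functions
on the configuration space. -/
abbrev H (d : ι → ℕ) : Type := Cfg d → ℂ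

/-- The standard hermitian inner product `⟪φ, ψ⟫`. -/
noncomputable def dotc (d : ι → ℕ) (φ ψ : H d) : ℂ :=
  ∑ x, conj (φ x) * ψ x

/-- The rank-one operator `|ψ⟩⟨φ|` as a matrix. -/
noncomputable def dyad (d : ι → ℕ) (ψ φ : H d) : Matrix (Cfg d) (Cfg d) ℂ :=
  Matrix.of fun x y => ψ x * conj (φ y)

/-- Configurations of the parties inside `S`. -/
abbrev SubCfg (d : ι → ℕ) (S : Finset ι) : Type := ∀ i : S, Fin (d i.1)

/-- Configurations of the parties outside `S`. -/
abbrev CoCfg (d : ι → ℕ) (S : Finset ι) : Type := ∀ i : {j : ι // j ∉ S}, Fin (d i.1)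

/-- Merge a configuration of the parties in `S` with one of the parties outside `S`. -/
def merge (d : ι → ℕ) (S : Finset ι) (a : SubCfg d S) (c : CoCfg d S) : Cfg d :=
  fun i => if h : i ∈ S then a ⟨i, h⟩ else c ⟨i, h⟩

/-- Partial trace over the parties *outside* `S` (i.e. `Tr_{Sᶜ}`), leaving an operator
on the parties in `S`. -/
noncomputable def ptr (d : ι → ℕ) (S : Finset ι) (M : Matrix (Cfg d) (Cfg d) ℂ) :
    Matrix (SubCfg d S) (SubCfg d S) ℂ :=
  Matrix.of fun a b => ∑ c : CoCfg d S, M (merge d S a c) (merge d S b c)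

/-- The maximally mixed state `(1/d_S) I_S` on the parties in `S`. -/
noncomputable def unifMix (d : ι → ℕ) (S : Finset ι) :
    Matrix (SubCfg d S) (SubCfg d S) ℂ :=
  (∏ i : S, (d i.1 : ℂ))⁻¹ • 1

/-- `ψ` is a unit vector. -/
def IsUnitVec (d : ι → ℕ) (ψ : H d) : Prop := dotc d ψ ψ = 1

/-- `ψ` is `r`-uniform: every reduction to `r` parties is maximally mixed. -/
def IsUniform (d : ι → ℕ) (r : ℕ) (ψ : H d) : Prop :=
  ∀ S : Finset ι, S.card = r → ptr d S (dyad d ψ ψ) = unifMix d S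

/-- A subspace is `r`-uniform if every unit vector in it is an `r`-uniform state. -/
def IsUniformSubspace (d : ι → ℕ) (r : ℕ) (W : Submodule ℂ (H d)) : Prop :=
  ∀ ψ ∈ W, IsUnitVec d ψ → IsUniform d r ψ

end RUnif

/-!
Let `φ i` and `χ i` be orthonormal bases of the two codes and consider `Ψ = ∑ i, φ i ⊗ χ i`. By
polarization, every `|φ i⟩⟨φ j|` has a reduction proportional to the identity on any `r₁` parties.
The dimension of a QMDS code is exactly what makes its basis, reshaped across a cut into `r₁` and
`n₁ - r₁` parties, a square matrix; being proportional to an isometry it is then proportional to a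
unitary, so the code projector `∑ i, |φ i⟩⟨φ i|` is maximally mixed even on `n₁ - r₁` parties.
Among `r₁ + r₂ + 1` parties of `Ψ`, at most `r₁` lie on the left or at most `r₂` lie on the right,
and expanding `|Ψ⟩⟨Ψ|` as `∑ i j, |φ i⟩⟨φ j| ⊗ |χ i⟩⟨χ j|` shows that in both cases the reduction
is maximally mixed. Consequently contracting `α + β` parties of `Ψ` is a multiple of an isometry,
and its image is the uniform subspace.
-/

namespace RUnif

section Vectors

variable {ι : Type} {d : ι → ℕ}

lemma dyad_eq_vecMulVec (ψ φ : H d) : dyad d ψ φ = Matrix.vecMulVec ψ (star φ) := rfl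

lemma dyad_smul_smul (c : ℂ) (ψ : H d) : dyad d (c • ψ) (c • ψ) = (c * conj c) • dyad d ψ ψ := by
  ext x y
  simp only [dyad, Matrix.of_apply, Matrix.smul_apply, Pi.smul_apply, smul_eq_mul, map_mul]
  ring

lemma dyad_polarization (ψ φ : H d) :
    dyad d ψ φ = (1 / 4 : ℂ) • (dyad d (ψ + φ) (ψ + φ) - dyad d (ψ - φ) (ψ - φ)
      + Complex.I • (dyad d (ψ + Complex.I • φ) (ψ + Complex.I • φ)
        - dyad d (ψ - Complex.I • φ) (ψ - Complex.I • φ))) := by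
  ext x y
  simp only [dyad, Matrix.of_apply, Matrix.smul_apply, Matrix.add_apply, Matrix.sub_apply,
    Pi.add_apply, Pi.sub_apply, Pi.smul_apply, smul_eq_mul, map_add, map_sub, map_mul,
    Complex.conj_I]
  linear_combination (1 / 2 * ψ x * conj (φ y) - 1 / 2 * φ x * conj (ψ y)) * Complex.I_sq

lemma dyad_mem_of_forall_dyad_self_mem {P : Submodule ℂ (Matrix (Cfg d) (Cfg d) ℂ)}
    {W : Submodule ℂ (H d)} (hP : ∀ ψ ∈ W, dyad d ψ ψ ∈ P) {ψ φ : H d} (hψ : ψ ∈ W)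
    (hφ : φ ∈ W) : dyad d ψ φ ∈ P := by
  have hIφ : Complex.I • φ ∈ W := W.smul_mem _ hφ
  rw [dyad_polarization]
  exact P.smul_mem _ <| P.add_mem
    (P.sub_mem (hP _ (W.add_mem hψ hφ)) (hP _ (W.sub_mem hψ hφ)))
    (P.smul_mem _ (P.sub_mem (hP _ (W.add_mem hψ hIφ)) (hP _ (W.sub_mem hψ hIφ))))

variable [Fintype ι] [DecidableEq ι]

lemma dotc_eq_inner (φ ψ : H d) :
    dotc d φ ψ = inner ℂ (WithLp.toLp 2 φ) (WithLp.toLp 2 ψ) := by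
  rw [EuclideanSpace.inner_toLp_toLp, dotProduct_comm]
  rfl

lemma dotc_self_eq_zero {ψ : H d} : dotc d ψ ψ = 0 ↔ ψ = 0 := by
  rw [dotc_eq_inner, inner_self_eq_zero, WithLp.toLp_eq_zero]

lemma exists_smul_isUnitVec {ψ : H d} (hψ : ψ ≠ 0) : ∃ c : ℂ, c ≠ 0 ∧ IsUnitVec d (c • ψ) := by
  refine ⟨(‖WithLp.toLp 2 ψ‖⁻¹ : ℝ), by simpa using hψ, ?_⟩
  rw [IsUnitVec, dotc_eq_inner, WithLp.toLp_smul, inner_self_eq_norm_sq_to_K,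
    Complex.ofReal_inv]
  simp [norm_smul, hψ]

lemma exists_orthonormal_family (W : Submodule ℂ (H d)) {K : ℕ} (hK : Module.finrank ℂ W = K) :
    ∃ φ : Fin K → H d, (∀ i, φ i ∈ W) ∧
      ∀ i j, dotc d (φ i) (φ j) = if i = j then 1 else 0 := by
  let toEuclidean := (WithLp.linearEquiv 2 ℂ (H d)).symm
  let WE : Submodule ℂ (EuclideanSpace ℂ (Cfg d)) := W.map toEuclidean.toLinearMap
  let b := (stdOrthonormalBasis ℂ WE).reindex
    (finCongr ((LinearEquiv.finrank_map_eq toEuclidean W).trans hK))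
  refine ⟨fun i ↦ toEuclidean.symm (b i), fun i ↦ ?_, fun i j ↦ ?_⟩
  · obtain ⟨ψ, hψ, hψb⟩ := (b i).2
    simp only [← hψb]
    simpa using hψ
  · rw [dotc_eq_inner, ← orthonormal_iff_ite.mp b.orthonormal i j]
    rfl

lemma trace_dyad (ψ φ : H d) : (dyad d ψ φ).trace = dotc d φ ψ := by
  rw [dyad_eq_vecMulVec, Matrix.trace_vecMulVec, dotProduct_comm]
  rfl

end Vectors

section Reductions

variable {ι : Type} [DecidableEq ι] {d : ι → ℕ}

lemma unifMix_eq_inv_card_smul_one (d : ι → ℕ) (S : Finset ι) :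
    unifMix d S = (Fintype.card (SubCfg d S) : ℂ)⁻¹ • 1 := by
  simp [unifMix]

lemma restrict_merge (S : Finset ι) (u : SubCfg d S) (c : CoCfg d S) :
    S.restrict (merge d S u c) = u := by
  funext i
  simp [merge]

variable [Fintype ι] {S : Finset ι} {M : Matrix (Cfg d) (Cfg d) ℂ}

/-- The operators whose reduction to the parties in `S` is proportional to the maximally mixed
state; the factor of proportionality is then the trace. -/
def mixedOperators (d : ι → ℕ) (S : Finset ι) : Submodule ℂ (Matrix (Cfg d) (Cfg d) ℂ) where
  carrier := {M | ptr d S M = M.trace • unifMix d S}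
  zero_mem' := by
    ext u v
    simp [ptr]
  add_mem' {M N} hM hN := by
    rw [Set.mem_ofPred_eq] at *
    rw [Matrix.trace_add, add_smul, ← hM, ← hN]
    ext u v
    simp [ptr, Finset.sum_add_distrib]
  smul_mem' k M hM := by
    rw [Set.mem_ofPred_eq] at *
    rw [Matrix.trace_smul, smul_assoc, ← hM]
    ext u v
    simp [ptr, Finset.mul_sum]

lemma mem_mixedOperators : M ∈ mixedOperators d S ↔ ptr d S M = M.trace • unifMix d S := Iff.rfl

/-- The reduction of `M` to the parties in `S`, indexed by configurations of all parties and
scaled by the dimension of `S`. Unlike `ptr`, its index type does not depend on `S`, so that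
reductions to nested sets of parties can be compared. -/
noncomputable def paddedPtr (d : ι → ℕ) (S : Finset ι) (M : Matrix (Cfg d) (Cfg d) ℂ) :
    Matrix (Cfg d) (Cfg d) ℂ :=
  ∑ c, M.submatrix (S.piecewise · c) (S.piecewise · c)

lemma paddedPtr_apply (S : Finset ι) (M : Matrix (Cfg d) (Cfg d) ℂ) (a b : Cfg d) :
    paddedPtr d S M a b = ∑ c, M (S.piecewise a c) (S.piecewise b c) := by
  simp [paddedPtr, Matrix.sum_apply]

lemma paddedPtr_sum {I : Type} [Fintype I] (S : Finset ι) (M : I → Matrix (Cfg d) (Cfg d) ℂ)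
    (a b : Cfg d) : paddedPtr d S (∑ i, M i) a b = ∑ i, paddedPtr d S (M i) a b := by
  simp only [paddedPtr_apply, Matrix.sum_apply]
  exact Finset.sum_comm

lemma paddedPtr_empty (M : Matrix (Cfg d) (Cfg d) ℂ) (a b : Cfg d) :
    paddedPtr d ∅ M a b = M.trace := by
  simp [paddedPtr_apply, Matrix.trace]

lemma paddedPtr_eq_card_mul_ptr (S : Finset ι) (M : Matrix (Cfg d) (Cfg d) ℂ) (a b : Cfg d) :
    paddedPtr d S M a b =
      Fintype.card (SubCfg d S) * ptr d S M (S.restrict a) (S.restrict b) := by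
  let split := Equiv.piEquivPiSubtypeProd (· ∈ S) fun i ↦ Fin (d i)
  have piecewise_split (a : Cfg d) (u : SubCfg d S) (c : CoCfg d S) :
      S.piecewise a (split.symm (u, c)) = merge d S (S.restrict a) c := by
    funext i
    by_cases hi : i ∈ S <;> simp [split, merge, hi, Equiv.piEquivPiSubtypeProd]
  rw [paddedPtr_apply, ← split.symm.sum_comp, Fintype.sum_prod_type]
  simp only [piecewise_split, Finset.sum_const, Finset.card_univ, nsmul_eq_mul]
  rfl

lemma mem_mixedOperators_iff_paddedPtr :
    M ∈ mixedOperators d S ↔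
      ∀ a b, paddedPtr d S M a b = if S.restrict a = S.restrict b then M.trace else 0 := by
  simp only [mem_mixedOperators, unifMix_eq_inv_card_smul_one, paddedPtr_eq_card_mul_ptr]
  constructor
  · intro hM a b
    have : Nonempty (SubCfg d S) := ⟨S.restrict a⟩
    simp [-Fintype.card_pi, hM, Matrix.one_apply, mul_left_comm]
  · intro hM
    ext u v
    have : Nonempty (SubCfg d S) := ⟨u⟩
    cases isEmpty_or_nonempty (CoCfg d S) with
    | inl hempty =>
      have : IsEmpty (Cfg d) := ⟨fun a ↦ hempty.elim fun i ↦ a i⟩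
      simp [ptr, Matrix.trace]
    | inr hnonempty =>
      obtain ⟨c⟩ := hnonempty
      have huv := hM (merge d S u c) (merge d S v c)
      rw [restrict_merge, restrict_merge] at huv
      have hcard : (Fintype.card (SubCfg d S) : ℂ) ≠ 0 := Nat.cast_ne_zero.mpr Fintype.card_ne_zero
      apply mul_left_cancel₀ hcard
      rw [huv]
      simp only [Matrix.smul_apply, Matrix.one_apply, smul_eq_mul]
      split_ifs
      · rw [mul_one, mul_comm M.trace, mul_inv_cancel_left₀ hcard]
      · simp only [mul_zero]

lemma sum_sum_piecewise (S : Finset ι) (F : Cfg d → ℂ) :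
    ∑ c, ∑ c', F (S.piecewise c c') = Fintype.card (Cfg d) * ∑ c, F c := by
  let exchange (p : Cfg d × Cfg d) := (S.piecewise p.1 p.2, S.piecewise p.2 p.1)
  have exchange_involutive : Function.Involutive exchange := by
    intro p
    ext i <;> by_cases hi : i ∈ S <;> simp [exchange, hi]
  let e : Cfg d × Cfg d ≃ Cfg d × Cfg d := exchange_involutive.toPerm
  rw [← Fintype.sum_prod_type']
  refine (e.sum_comp fun p ↦ F p.1).trans ?_
  rw [Fintype.sum_prod_type]
  simp only [Finset.sum_const, Finset.card_univ, nsmul_eq_mul, Finset.mul_sum]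

lemma mixedOperators_antitone : Antitone (mixedOperators d) := by
  intro T S hTS M hM
  rw [mem_mixedOperators_iff_paddedPtr] at hM ⊢
  intro a b
  have : Nonempty (Cfg d) := ⟨a⟩
  have piecewise_piecewise (a c c' : Cfg d) :
      T.piecewise a (S.piecewise c c') = S.piecewise (T.piecewise a c) c' := by
    funext i
    by_cases hT : i ∈ T
    · simp [hT, hTS hT]
    · by_cases hS : i ∈ S <;> simp [hT, hS]
  have restrict_eq_iff (c : Cfg d) :
      S.restrict (T.piecewise a c) = S.restrict (T.piecewise b c) ↔
        T.restrict a = T.restrict b := by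
    simp only [funext_iff, Finset.restrict, Subtype.forall]
    refine ⟨fun h i hi ↦ by simpa [hi] using h i (hTS hi), fun h i _ ↦ ?_⟩
    by_cases hi : i ∈ T <;> simp [hi, h]
  have hcard : (Fintype.card (Cfg d) : ℂ) ≠ 0 := Nat.cast_ne_zero.mpr Fintype.card_ne_zero
  apply mul_left_cancel₀ hcard
  rw [paddedPtr_apply, ← sum_sum_piecewise S]
  simp only [piecewise_piecewise, ← paddedPtr_apply, hM, restrict_eq_iff, Finset.sum_const,
    Finset.card_univ, nsmul_eq_mul]

end Reductions

section Uniform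

variable {ι : Type} [Fintype ι] [DecidableEq ι] {d : ι → ℕ}

lemma isUniform_of_forall_dyad_mem {r : ℕ} {ψ : H d} (hψ : IsUnitVec d ψ)
    (h : ∀ S : Finset ι, S.card = r → dyad d ψ ψ ∈ mixedOperators d S) : IsUniform d r ψ := by
  intro S hS
  rw [mem_mixedOperators.mp (h S hS), trace_dyad, hψ, one_smul]

lemma IsUniformSubspace.dyad_mem_mixedOperators {r : ℕ} {W : Submodule ℂ (H d)}
    (hW : IsUniformSubspace d r W) (hr : r ≤ Fintype.card ι) {T : Finset ι} (hT : T.card ≤ r)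
    {ψ φ : H d} (hψ : ψ ∈ W) (hφ : φ ∈ W) : dyad d ψ φ ∈ mixedOperators d T := by
  obtain ⟨S, hTS, hS⟩ := Finset.exists_superset_card_eq hT hr
  refine mixedOperators_antitone hTS
    (dyad_mem_of_forall_dyad_self_mem (W := W) (fun x hx ↦ ?_) hψ hφ)
  rcases eq_or_ne x 0 with rfl | hx0
  · simp [dyad_eq_vecMulVec]
  obtain ⟨c, hc, hunit⟩ := exists_smul_isUnitVec hx0
  have hmem : dyad d (c • x) (c • x) ∈ mixedOperators d S := by
    rw [mem_mixedOperators, hW _ (W.smul_mem c hx) hunit S hS, trace_dyad, hunit, one_smul]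
  rwa [dyad_smul_smul, Submodule.smul_mem_iff _ (by simpa using hc)] at hmem

/-- Identifies the two encodings of a configuration outside `S`, by non-membership in `S` and by
membership in `Sᶜ`. -/
def coCfgEquiv (d : ι → ℕ) (S : Finset ι) : CoCfg d S ≃ SubCfg d Sᶜ where
  toFun c i := c ⟨i, Finset.mem_compl.mp i.2⟩
  invFun u i := u ⟨i, Finset.mem_compl.mpr i.2⟩

lemma sum_merge_eq_ptr_compl (S : Finset ι) (M : Matrix (Cfg d) (Cfg d) ℂ) (c c' : CoCfg d S) :
    ∑ u, M (merge d S u c) (merge d S u c') =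
      ptr d Sᶜ M (coCfgEquiv d S c) (coCfgEquiv d S c') := by
  let e : SubCfg d S ≃ CoCfg d Sᶜ :=
    { toFun u i := u ⟨i, by simpa using i.2⟩
      invFun w i := w ⟨i, by simp⟩ }
  have merge_compl (u : SubCfg d S) (c : CoCfg d S) :
      merge d S u c = merge d Sᶜ (coCfgEquiv d S c) (e u) := by
    funext i
    by_cases hi : i ∈ S <;> simp [merge, e, coCfgEquiv, hi]
  simp only [merge_compl, ptr, Matrix.of_apply]
  exact e.sum_comp fun w ↦ M (merge d Sᶜ _ w) (merge d Sᶜ _ w)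

lemma mul_conjTranspose_eq_smul_one {m n : Type} [Fintype m] [Fintype n] [DecidableEq m]
    [DecidableEq n] (hcard : Fintype.card m = Fintype.card n) {B : Matrix m n ℂ} {k : ℂ}
    (hk : k ≠ 0) (hB : Bᴴ * B = k • 1) : B * Bᴴ = k • 1 := by
  have hleft : (k⁻¹ • Bᴴ) * B = 1 := by rw [Matrix.smul_mul, hB, inv_smul_smul₀ hk]
  have hright := (Matrix.mul_eq_one_comm_of_card_eq (R := ℂ) (eq := hcard.symm)).mp hleft
  rw [← hright, Matrix.mul_smul, smul_inv_smul₀ hk]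

/-- The vectors `φ i`, reshaped into the matrix whose rows are indexed by the configurations of the
parties in `S`. -/
def reshape {I : Type} (S : Finset ι) (φ : I → H d) : Matrix (SubCfg d S) (I × CoCfg d S) ℂ :=
  Matrix.of fun u p ↦ φ p.1 (merge d S u p.2)

lemma reshape_mul_conjTranspose {I : Type} [Fintype I] (S : Finset ι) (φ : I → H d) :
    reshape S φ * (reshape S φ)ᴴ = ptr d S (∑ i, dyad d (φ i) (φ i)) := by
  ext u v
  simp only [reshape, ptr, Matrix.of_apply, Matrix.sum_apply, dyad, Matrix.mul_apply,
    Matrix.conjTranspose_apply, Fintype.sum_prod_type]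
  exact Finset.sum_comm

lemma conjTranspose_reshape_mul {I : Type} [DecidableEq I] {S : Finset ι} {φ : I → H d}
    (hortho : ∀ i j, dotc d (φ i) (φ j) = if i = j then 1 else 0)
    (hφ : ∀ i j, dyad d (φ i) (φ j) ∈ mixedOperators d Sᶜ) :
    (reshape S φ)ᴴ * reshape S φ = (Fintype.card (SubCfg d Sᶜ) : ℂ)⁻¹ • 1 := by
  ext ⟨i, c⟩ ⟨j, c'⟩
  calc ((reshape S φ)ᴴ * reshape S φ) (i, c) (j, c')
    _ = ∑ u, dyad d (φ j) (φ i) (merge d S u c') (merge d S u c) := by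
      simp [reshape, Matrix.mul_apply, dyad, mul_comm]
    _ = ptr d Sᶜ (dyad d (φ j) (φ i)) (coCfgEquiv d S c') (coCfgEquiv d S c) :=
      sum_merge_eq_ptr_compl S _ c' c
    _ = ((Fintype.card (SubCfg d Sᶜ) : ℂ)⁻¹ • 1 : Matrix (I × CoCfg d S) _ ℂ) (i, c) (j, c') := by
      rw [mem_mixedOperators.mp (hφ j i), trace_dyad, hortho, unifMix_eq_inv_card_smul_one]
      simp only [Matrix.smul_apply, Matrix.one_apply, Prod.mk.injEq, EmbeddingLike.apply_eq_iff_eq,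
        eq_comm (a := c')]
      split_ifs <;> simp_all

lemma sum_dyad_mem_mixedOperators {I : Type} [Fintype I] [DecidableEq I] {S : Finset ι}
    {φ : I → H d} (hortho : ∀ i j, dotc d (φ i) (φ j) = if i = j then 1 else 0)
    (hφ : ∀ i j, dyad d (φ i) (φ j) ∈ mixedOperators d Sᶜ)
    (hcard : Fintype.card (SubCfg d S) = Fintype.card I * Fintype.card (SubCfg d Sᶜ)) :
    ∑ i, dyad d (φ i) (φ i) ∈ mixedOperators d S := by
  have hsquare : Fintype.card (SubCfg d S) = Fintype.card (I × CoCfg d S) := by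
    rw [hcard, Fintype.card_prod, Fintype.card_congr (coCfgEquiv d S)]
  have htrace : (∑ i, dyad d (φ i) (φ i)).trace = Fintype.card I := by
    simp [Matrix.trace_sum, trace_dyad, hortho]
  rw [mem_mixedOperators, ← reshape_mul_conjTranspose, htrace, unifMix_eq_inv_card_smul_one]
  ext u v
  have : Nonempty (SubCfg d S) := ⟨u⟩
  have hne : Fintype.card I * Fintype.card (SubCfg d Sᶜ) ≠ 0 := hcard ▸ Fintype.card_ne_zero
  obtain ⟨hI, hcompl⟩ : (Fintype.card I : ℂ) ≠ 0 ∧ (Fintype.card (SubCfg d Sᶜ) : ℂ) ≠ 0 := by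
    exact_mod_cast mul_ne_zero_iff.mp hne
  rw [mul_conjTranspose_eq_smul_one hsquare (inv_ne_zero hcompl)
    (conjTranspose_reshape_mul hortho hφ), hcard, smul_smul, Nat.cast_mul, mul_inv,
    mul_inv_cancel_left₀ hI]

end Uniform

section Product

open scoped Kronecker

variable {ι₁ ι₂ : Type} {d₁ : ι₁ → ℕ} {d₂ : ι₂ → ℕ}

/-- A configuration of a bipartite system as a pair of configurations of its two halves. -/
def splitCfg (d₁ : ι₁ → ℕ) (d₂ : ι₂ → ℕ) : Cfg (Sum.elim d₁ d₂) ≃ Cfg d₁ × Cfg d₂ :=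
  Equiv.sumPiEquivProdPi _

lemma restrict_eq_restrict_iff_splitCfg {S : Finset (ι₁ ⊕ ι₂)} {a b : Cfg (Sum.elim d₁ d₂)} :
    S.restrict a = S.restrict b ↔
      S.toLeft.restrict (splitCfg d₁ d₂ a).1 = S.toLeft.restrict (splitCfg d₁ d₂ b).1 ∧
        S.toRight.restrict (splitCfg d₁ d₂ a).2 = S.toRight.restrict (splitCfg d₁ d₂ b).2 := by
  simp only [funext_iff, Finset.restrict, Subtype.forall, Sum.forall, Finset.mem_toLeft,
    Finset.mem_toRight]
  rfl

/-- The operator `M ⊗ N` on a bipartite system. -/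
def tensorOp (M : Matrix (Cfg d₁) (Cfg d₁) ℂ) (N : Matrix (Cfg d₂) (Cfg d₂) ℂ) :
    Matrix (Cfg (Sum.elim d₁ d₂)) (Cfg (Sum.elim d₁ d₂)) ℂ :=
  (M ⊗ₖ N).submatrix (splitCfg d₁ d₂) (splitCfg d₁ d₂)

/-- The vector `∑ i, φ i ⊗ χ i`: an unnormalised maximally entangled state between the spans of
`φ` and `χ` when both families are orthonormal. -/
noncomputable def maxEntangled {I : Type} [Fintype I] (φ : I → H d₁) (χ : I → H d₂) :
    H (Sum.elim d₁ d₂) :=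
  fun x ↦ ∑ i, φ i (splitCfg d₁ d₂ x).1 * χ i (splitCfg d₁ d₂ x).2

lemma dyad_maxEntangled {I : Type} [Fintype I] (φ : I → H d₁) (χ : I → H d₂) :
    dyad _ (maxEntangled φ χ) (maxEntangled φ χ) =
      ∑ i, ∑ j, tensorOp (dyad d₁ (φ i) (φ j)) (dyad d₂ (χ i) (χ j)) := by
  ext x y
  simp only [dyad, maxEntangled, tensorOp, Matrix.of_apply, Matrix.sum_apply,
    Matrix.submatrix_apply, map_sum, map_mul, Finset.sum_mul_sum]
  exact Finset.sum_congr rfl fun i _ ↦ Finset.sum_congr rfl fun j _ ↦ mul_mul_mul_comm ..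

variable [DecidableEq ι₁] [DecidableEq ι₂]

lemma splitCfg_piecewise (S : Finset (ι₁ ⊕ ι₂)) (a c : Cfg (Sum.elim d₁ d₂)) :
    splitCfg d₁ d₂ (S.piecewise a c) =
      (S.toLeft.piecewise (splitCfg d₁ d₂ a).1 (splitCfg d₁ d₂ c).1,
        S.toRight.piecewise (splitCfg d₁ d₂ a).2 (splitCfg d₁ d₂ c).2) := by
  ext i <;> simp only [splitCfg, Finset.piecewise, Finset.mem_toLeft, Finset.mem_toRight] <;> rfl

variable [Fintype ι₁] [Fintype ι₂]

lemma trace_tensorOp (M : Matrix (Cfg d₁) (Cfg d₁) ℂ) (N : Matrix (Cfg d₂) (Cfg d₂) ℂ) :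
    (tensorOp M N).trace = M.trace * N.trace := by
  rw [← Matrix.trace_kronecker]
  exact (splitCfg d₁ d₂).sum_comp fun x ↦ (M ⊗ₖ N) x x

lemma paddedPtr_tensorOp (S : Finset (ι₁ ⊕ ι₂)) (M : Matrix (Cfg d₁) (Cfg d₁) ℂ)
    (N : Matrix (Cfg d₂) (Cfg d₂) ℂ) (a b : Cfg (Sum.elim d₁ d₂)) :
    paddedPtr _ S (tensorOp M N) a b =
      paddedPtr d₁ S.toLeft M (splitCfg d₁ d₂ a).1 (splitCfg d₁ d₂ b).1 *
        paddedPtr d₂ S.toRight N (splitCfg d₁ d₂ a).2 (splitCfg d₁ d₂ b).2 := by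
  simp only [paddedPtr_apply, tensorOp, Matrix.submatrix_apply, splitCfg_piecewise,
    Matrix.kronecker_apply, Finset.sum_mul_sum, ← Fintype.sum_prod_type']
  exact (splitCfg d₁ d₂).sum_comp fun c ↦
    M (S.toLeft.piecewise _ c.1) (S.toLeft.piecewise _ c.1) *
      N (S.toRight.piecewise _ c.2) (S.toRight.piecewise _ c.2)

variable {I : Type} [Fintype I] [DecidableEq I] {φ : I → H d₁} {χ : I → H d₂}

lemma trace_dyad_maxEntangled
    (hφ : ∀ i j, dotc d₁ (φ i) (φ j) = if i = j then 1 else 0)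
    (hχ : ∀ i j, dotc d₂ (χ i) (χ j) = if i = j then 1 else 0) :
    (dyad _ (maxEntangled φ χ) (maxEntangled φ χ)).trace = Fintype.card I := by
  simp [dyad_maxEntangled, Matrix.trace_sum, trace_tensorOp, trace_dyad, hφ, hχ]

lemma dyad_maxEntangled_mem_of_left {S : Finset (ι₁ ⊕ ι₂)}
    (hφ : ∀ i j, dotc d₁ (φ i) (φ j) = if i = j then 1 else 0)
    (hχ : ∀ i j, dotc d₂ (χ i) (χ j) = if i = j then 1 else 0)
    (hleft : ∀ i j, dyad d₁ (φ i) (φ j) ∈ mixedOperators d₁ S.toLeft)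
    (hright : ∑ i, dyad d₂ (χ i) (χ i) ∈ mixedOperators d₂ S.toRight) :
    dyad _ (maxEntangled φ χ) (maxEntangled φ χ) ∈ mixedOperators (Sum.elim d₁ d₂) S := by
  simp only [mem_mixedOperators_iff_paddedPtr, trace_dyad, hφ] at hleft
  simp only [mem_mixedOperators_iff_paddedPtr, Matrix.trace_sum, trace_dyad, hχ,
    paddedPtr_sum] at hright
  rw [mem_mixedOperators_iff_paddedPtr, trace_dyad_maxEntangled hφ hχ]
  intro a b
  simp only [dyad_maxEntangled, paddedPtr_sum, paddedPtr_tensorOp, hleft,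
    restrict_eq_restrict_iff_splitCfg, ite_and]
  split_ifs <;> simp [*]

lemma dyad_maxEntangled_mem_of_right {S : Finset (ι₁ ⊕ ι₂)}
    (hφ : ∀ i j, dotc d₁ (φ i) (φ j) = if i = j then 1 else 0)
    (hχ : ∀ i j, dotc d₂ (χ i) (χ j) = if i = j then 1 else 0)
    (hleft : ∑ i, dyad d₁ (φ i) (φ i) ∈ mixedOperators d₁ S.toLeft)
    (hright : ∀ i j, dyad d₂ (χ i) (χ j) ∈ mixedOperators d₂ S.toRight) :
    dyad _ (maxEntangled φ χ) (maxEntangled φ χ) ∈ mixedOperators (Sum.elim d₁ d₂) S := by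
  simp only [mem_mixedOperators_iff_paddedPtr, trace_dyad, hχ] at hright
  simp only [mem_mixedOperators_iff_paddedPtr, Matrix.trace_sum, trace_dyad, hφ,
    paddedPtr_sum] at hleft
  rw [mem_mixedOperators_iff_paddedPtr, trace_dyad_maxEntangled hφ hχ]
  intro a b
  simp only [dyad_maxEntangled, paddedPtr_sum, paddedPtr_tensorOp, hright,
    restrict_eq_restrict_iff_splitCfg, ite_and]
  split_ifs <;> simp [*]

end Product

section Contraction

variable {ι κ A : Type} {d : ι → ℕ}

/-- Joins a configuration of the parties `κ` and one of the parties `A` into a configuration of all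
parties `ι`, along an identification `e` of `ι` with the disjoint union of `κ` and `A`. -/
def glueCfg (d : ι → ℕ) (e : κ ⊕ A ≃ ι) :
    Cfg (fun k ↦ d (e (.inl k))) × Cfg (fun a ↦ d (e (.inr a))) ≃ Cfg d :=
  (Equiv.sumPiEquivProdPi fun i ↦ Fin (d (e i))).symm.trans
    (Equiv.piCongrLeft (fun i ↦ Fin (d i)) e)

variable {e : κ ⊕ A ≃ ι}

lemma glueCfg_inl (p) (k : κ) : glueCfg d e p (e (.inl k)) = p.1 k :=
  Equiv.piCongrLeft_apply_apply (fun i ↦ Fin (d i)) e _ (.inl k)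

lemma glueCfg_inr (p) (a : A) : glueCfg d e p (e (.inr a)) = p.2 a :=
  Equiv.piCongrLeft_apply_apply (fun i ↦ Fin (d i)) e _ (.inr a)

variable [Fintype A]

/-- The parties of `S` together with all the parties in `A`. -/
def adjoinParties (e : κ ⊕ A ≃ ι) (S : Finset κ) : Finset ι :=
  (S.disjSum Finset.univ).map e.toEmbedding

lemma inl_mem_adjoinParties {S : Finset κ} {k : κ} :
    e (.inl k) ∈ adjoinParties e S ↔ k ∈ S := by
  simp [adjoinParties]

lemma inr_mem_adjoinParties {S : Finset κ} (a : A) : e (.inr a) ∈ adjoinParties e S := by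
  simp [adjoinParties]

lemma restrict_glueCfg_eq_iff {S : Finset κ} {x y : Cfg fun k ↦ d (e (.inl k))}
    {z z' : Cfg fun a ↦ d (e (.inr a))} :
    (adjoinParties e S).restrict (glueCfg d e (x, z)) =
        (adjoinParties e S).restrict (glueCfg d e (y, z')) ↔
      S.restrict x = S.restrict y ∧ z = z' := by
  simp [funext_iff, e.surjective.forall, inl_mem_adjoinParties, inr_mem_adjoinParties,
    glueCfg_inl, glueCfg_inr]

lemma glueCfg_piecewise [DecidableEq ι] [DecidableEq κ] (S : Finset κ)
    (x y : Cfg fun k ↦ d (e (.inl k))) (z z' : Cfg fun a ↦ d (e (.inr a))) :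
    (adjoinParties e S).piecewise (glueCfg d e (x, z)) (glueCfg d e (y, z')) =
      glueCfg d e (S.piecewise x y, z) := by
  funext i
  obtain ⟨k | a, rfl⟩ := e.surjective i
  · simp [Finset.piecewise, inl_mem_adjoinParties, glueCfg_inl]
  · simp [Finset.piecewise, inr_mem_adjoinParties, glueCfg_inr]

variable [DecidableEq A]

/-- The contraction `v ↦ (I ⊗ ⟨v̄|) Ψ` of the parties in `A`, regarded as a linear map in `v`. -/
noncomputable def contract (d : ι → ℕ) (e : κ ⊕ A ≃ ι) (Ψ : H d) :
    H (fun a ↦ d (e (.inr a))) →ₗ[ℂ] H (fun k ↦ d (e (.inl k))) :=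
  Matrix.mulVecLin (Matrix.of fun x z ↦ Ψ (glueCfg d e (x, z)))

lemma dyad_contract (Ψ : H d) (v w : H fun a ↦ d (e (.inr a))) :
    dyad _ (contract d e Ψ v) (contract d e Ψ w) =
      ∑ z, ∑ z', (v z * conj (w z')) • (dyad d Ψ Ψ).submatrix
        (glueCfg d e ⟨·, z⟩) (glueCfg d e ⟨·, z'⟩) := by
  ext x y
  simp only [dyad, contract, Matrix.mulVecLin_apply, Matrix.mulVec, dotProduct, Matrix.of_apply,
    Matrix.sum_apply, Matrix.smul_apply, Matrix.submatrix_apply, map_sum, map_mul,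
    Finset.sum_mul_sum, smul_eq_mul]
  exact Finset.sum_congr rfl fun z _ ↦ Finset.sum_congr rfl fun z' _ ↦ by ring

variable [Fintype ι] [DecidableEq ι] [Fintype κ] [DecidableEq κ]

lemma paddedPtr_adjoinParties (S : Finset κ) (M : Matrix (Cfg d) (Cfg d) ℂ)
    (x y : Cfg fun k ↦ d (e (.inl k))) (z z' : Cfg fun a ↦ d (e (.inr a))) :
    paddedPtr d (adjoinParties e S) M (glueCfg d e (x, z)) (glueCfg d e (y, z')) =
      Fintype.card (Cfg fun a ↦ d (e (.inr a))) *
        paddedPtr _ S (M.submatrix (glueCfg d e ⟨·, z⟩) (glueCfg d e ⟨·, z'⟩)) x y := by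
  rw [paddedPtr_apply, ← (glueCfg d e).sum_comp, Fintype.sum_prod_type]
  simp only [glueCfg_piecewise, paddedPtr_apply, Matrix.submatrix_apply, Finset.sum_const,
    Finset.card_univ, nsmul_eq_mul, Finset.mul_sum]

lemma card_mul_paddedPtr_dyad_contract {S : Finset κ} {Ψ : H d}
    (hΨ : dyad d Ψ Ψ ∈ mixedOperators d (adjoinParties e S)) (v w : H fun a ↦ d (e (.inr a)))
    (x y : Cfg fun k ↦ d (e (.inl k))) :
    Fintype.card (Cfg fun a ↦ d (e (.inr a))) *
        paddedPtr _ S (dyad _ (contract d e Ψ v) (contract d e Ψ w)) x y =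
      if S.restrict x = S.restrict y then dotc d Ψ Ψ * dotc _ w v else 0 := by
  have hslice z z' := (paddedPtr_adjoinParties S (dyad d Ψ Ψ) x y z z').symm.trans
    (mem_mixedOperators_iff_paddedPtr.mp hΨ _ _)
  simp only [trace_dyad, restrict_glueCfg_eq_iff] at hslice
  calc _
    _ = ∑ z, ∑ z', v z * conj (w z') * (Fintype.card (Cfg fun a ↦ d (e (.inr a))) *
          paddedPtr _ S ((dyad d Ψ Ψ).submatrix
            (glueCfg d e ⟨·, z⟩) (glueCfg d e ⟨·, z'⟩)) x y) := by
      simp only [dyad_contract, paddedPtr_sum, Finset.mul_sum]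
      refine Finset.sum_congr rfl fun z _ ↦ Finset.sum_congr rfl fun z' _ ↦ ?_
      simp only [paddedPtr_apply, Matrix.smul_apply, smul_eq_mul, Finset.mul_sum]
      exact Finset.sum_congr rfl fun c _ ↦ mul_left_comm ..
    _ = if S.restrict x = S.restrict y then dotc d Ψ Ψ * dotc _ w v else 0 := by
      simp only [hslice, ite_and]
      split_ifs
      · simp [dotc, Finset.mul_sum, mul_comm, mul_left_comm]
      · simp

lemma card_mul_dotc_contract [Nonempty (Cfg d)] {S : Finset κ} {Ψ : H d}
    (hΨ : dyad d Ψ Ψ ∈ mixedOperators d (adjoinParties e S)) (v w : H fun a ↦ d (e (.inr a))) :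
    Fintype.card (Cfg fun a ↦ d (e (.inr a))) *
      dotc _ (contract d e Ψ w) (contract d e Ψ v) = dotc d Ψ Ψ * dotc _ w v := by
  obtain ⟨x, -⟩ := (glueCfg d e).symm (Classical.arbitrary _)
  have hsub : adjoinParties e ∅ ⊆ adjoinParties e S :=
    Finset.map_subset_map.mpr (Finset.disjSum_mono (Finset.empty_subset S) subset_rfl)
  simpa [-Fintype.card_pi, paddedPtr_empty, trace_dyad] using
    card_mul_paddedPtr_dyad_contract (mixedOperators_antitone hsub hΨ) v w x x

lemma dyad_contract_mem_mixedOperators [Nonempty (Cfg d)] {S : Finset κ} {Ψ : H d}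
    (hΨ : dyad d Ψ Ψ ∈ mixedOperators d (adjoinParties e S)) (v w : H fun a ↦ d (e (.inr a))) :
    dyad _ (contract d e Ψ v) (contract d e Ψ w) ∈ mixedOperators _ S := by
  obtain ⟨-, z⟩ := (glueCfg d e).symm (Classical.arbitrary _)
  have : Nonempty (Cfg fun a ↦ d (e (.inr a))) := ⟨z⟩
  have hcard : (Fintype.card (Cfg fun a ↦ d (e (.inr a))) : ℂ) ≠ 0 :=
    Nat.cast_ne_zero.mpr Fintype.card_ne_zero
  rw [mem_mixedOperators_iff_paddedPtr]
  intro x y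
  apply mul_left_cancel₀ hcard
  rw [card_mul_paddedPtr_dyad_contract hΨ, trace_dyad, ← card_mul_dotc_contract hΨ, mul_ite,
    mul_zero]

lemma exists_isUniformSubspace_of_dyad_mem {Ψ : H d} (hΨ0 : Ψ ≠ 0) {l : ℕ}
    (hl : l ≤ Fintype.card κ)
    (hΨ : ∀ S : Finset κ, S.card = l → dyad d Ψ Ψ ∈ mixedOperators d (adjoinParties e S)) :
    ∃ W : Submodule ℂ (H fun k ↦ d (e (.inl k))), IsUniformSubspace _ l W ∧
      Module.finrank ℂ W = Fintype.card (Cfg fun a ↦ d (e (.inr a))) := by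
  obtain ⟨x, -⟩ := Function.ne_iff.mp hΨ0
  have : Nonempty (Cfg d) := ⟨x⟩
  obtain ⟨S, -, hS⟩ := Finset.exists_subset_card_eq (s := (Finset.univ : Finset κ)) hl
  have hinj : Function.Injective (contract d e Ψ) := by
    refine (injective_iff_map_eq_zero _).mpr fun v hv ↦ ?_
    have hdotc := card_mul_dotc_contract (hΨ S hS) v v
    rw [hv, dotc_self_eq_zero.mpr rfl, mul_zero, zero_eq_mul, dotc_self_eq_zero,
      dotc_self_eq_zero] at hdotc
    exact hdotc.resolve_left hΨ0
  refine ⟨(contract d e Ψ).range, ?_, ?_⟩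
  · rintro _ ⟨v, rfl⟩ hunit
    exact isUniform_of_forall_dyad_mem hunit fun S hS ↦
      dyad_contract_mem_mixedOperators (hΨ S hS) v v
  · rw [LinearMap.finrank_range_of_inj hinj, Module.finrank_fintype_fun_eq_card]

end Contraction

section QMDS

/-- The code space of a pure QMDS code with `D`-dimensional parties `ι` and distance `r + 1`, as an
`r`-uniform subspace whose dimension attains the quantum Singleton bound. The field `two_mul_le`
rules out truncation in the exponent. -/
structure IsQMDS {ι : Type} [Fintype ι] [DecidableEq ι] (D r : ℕ)
    (W : Submodule ℂ (H fun _ : ι ↦ D)) : Prop where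
  two_mul_le : 2 * r ≤ Fintype.card ι
  isUniformSubspace : IsUniformSubspace _ r W
  finrank_eq : Module.finrank ℂ W = D ^ (Fintype.card ι - 2 * r)

variable {ι : Type} [Fintype ι] [DecidableEq ι] {D r : ℕ} {W : Submodule ℂ (H fun _ : ι ↦ D)}

lemma IsQMDS.dyad_mem_mixedOperators (hW : IsQMDS D r W) {T : Finset ι} (hT : T.card ≤ r)
    {ψ φ : H fun _ : ι ↦ D} (hψ : ψ ∈ W) (hφ : φ ∈ W) : dyad _ ψ φ ∈ mixedOperators _ T :=
  hW.isUniformSubspace.dyad_mem_mixedOperators (by linarith [hW.two_mul_le]) hT hψ hφ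

lemma IsQMDS.sum_dyad_mem_mixedOperators (hW : IsQMDS D r W) {T : Finset ι}
    (hT : T.card + r ≤ Fintype.card ι) {K : ℕ} (hK : Module.finrank ℂ W = K)
    {φ : Fin K → H fun _ : ι ↦ D} (hφ : ∀ i, φ i ∈ W)
    (hortho : ∀ i j, dotc _ (φ i) (φ j) = if i = j then 1 else 0) :
    ∑ i, dyad _ (φ i) (φ i) ∈ mixedOperators _ T := by
  have hr := hW.two_mul_le
  obtain ⟨S, hTS, hS⟩ := Finset.exists_superset_card_eq (Nat.le_sub_of_add_le hT)
    (Nat.sub_le _ r)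
  have hcompl : Sᶜ.card = r := by rw [Finset.card_compl, hS]; omega
  refine mixedOperators_antitone hTS (RUnif.sum_dyad_mem_mixedOperators hortho
    (fun i j ↦ hW.dyad_mem_mixedOperators hcompl.le (hφ i) (hφ j)) ?_)
  have hexp : Fintype.card ι - r = Fintype.card ι - 2 * r + r := by omega
  rw [Fintype.card_fin, ← hK, hW.finrank_eq]
  simp [hcompl, hS, hexp, pow_add]

end QMDS

section Parties

variable {ι₁ ι₂ κ κ₁ κ₂ A A₁ A₂ : Type} [Fintype A] [Fintype A₁] [Fintype A₂]

lemma card_adjoinParties {ι : Type} (e : κ ⊕ A ≃ ι) (S : Finset κ) :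
    (adjoinParties e S).card = S.card + Fintype.card A := by
  simp [adjoinParties]

/-- Identifies the parties remaining and contracted on both sides with all parties. -/
def sumParties (e₁ : κ₁ ⊕ A₁ ≃ ι₁) (e₂ : κ₂ ⊕ A₂ ≃ ι₂) : (κ₁ ⊕ κ₂) ⊕ (A₁ ⊕ A₂) ≃ ι₁ ⊕ ι₂ :=
  (Equiv.sumSumSumComm κ₁ κ₂ A₁ A₂).trans (e₁.sumCongr e₂)

lemma toLeft_adjoinParties_sumParties (e₁ : κ₁ ⊕ A₁ ≃ ι₁) (e₂ : κ₂ ⊕ A₂ ≃ ι₂)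
    (S : Finset (κ₁ ⊕ κ₂)) :
    (adjoinParties (sumParties e₁ e₂) S).toLeft = adjoinParties e₁ S.toLeft := by
  ext i
  obtain ⟨k | a, rfl⟩ := e₁.surjective i
  · simp [adjoinParties, sumParties]
  · simp [adjoinParties, sumParties]

lemma toRight_adjoinParties_sumParties (e₁ : κ₁ ⊕ A₁ ≃ ι₁) (e₂ : κ₂ ⊕ A₂ ≃ ι₂)
    (S : Finset (κ₁ ⊕ κ₂)) :
    (adjoinParties (sumParties e₁ e₂) S).toRight = adjoinParties e₂ S.toRight := by
  ext i
  obtain ⟨k | a, rfl⟩ := e₂.surjective i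
  · simp [adjoinParties, sumParties]
  · simp [adjoinParties, sumParties]

end Parties

lemma exists_maxEntangled_dyad_mem {ι₁ ι₂ : Type} [Fintype ι₁] [DecidableEq ι₁] [Fintype ι₂]
    [DecidableEq ι₂] {D₁ D₂ r₁ r₂ : ℕ} {W₁ : Submodule ℂ (H fun _ : ι₁ ↦ D₁)}
    {W₂ : Submodule ℂ (H fun _ : ι₂ ↦ D₂)} (hW₁ : IsQMDS D₁ r₁ W₁) (hW₂ : IsQMDS D₂ r₂ W₂)
    (hK : Module.finrank ℂ W₁ = Module.finrank ℂ W₂) (hpos : W₁ ≠ ⊥) :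
    ∃ Ψ : H (Sum.elim (fun _ : ι₁ ↦ D₁) fun _ : ι₂ ↦ D₂), Ψ ≠ 0 ∧
      ∀ T : Finset (ι₁ ⊕ ι₂), T.toLeft.card + r₁ ≤ Fintype.card ι₁ →
        T.toRight.card + r₂ ≤ Fintype.card ι₂ → T.card ≤ r₁ + r₂ + 1 →
        dyad _ Ψ Ψ ∈ mixedOperators _ T := by
  obtain ⟨φ, hφ, hφortho⟩ := exists_orthonormal_family W₁ rfl
  obtain ⟨χ, hχ, hχortho⟩ := exists_orthonormal_family W₂ hK.symm
  refine ⟨maxEntangled φ χ, fun h0 ↦ ?_, fun T hleft hright hT ↦ ?_⟩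
  · have htrace := trace_dyad_maxEntangled hφortho hχortho
    rw [h0, trace_dyad, dotc_self_eq_zero.mpr rfl, Fintype.card_fin, eq_comm, Nat.cast_eq_zero,
      Submodule.finrank_eq_zero] at htrace
    exact hpos htrace
  · rw [← Finset.card_toLeft_add_card_toRight] at hT
    obtain hsmall | hsmall : T.toLeft.card ≤ r₁ ∨ T.toRight.card ≤ r₂ := by omega
    · exact dyad_maxEntangled_mem_of_left hφortho hχortho
        (fun i j ↦ hW₁.dyad_mem_mixedOperators hsmall (hφ i) (hφ j))
        (hW₂.sum_dyad_mem_mixedOperators hright hK.symm hχ hχortho)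
    · exact dyad_maxEntangled_mem_of_right hφortho hχortho
        (hW₁.sum_dyad_mem_mixedOperators hleft rfl hφ hφortho)
        (fun i j ↦ hW₂.dyad_mem_mixedOperators hsmall (hχ i) (hχ j))

end RUnif

open RUnif in
theorem statement9_general {ι₁ ι₂ κ₁ κ₂ A₁ A₂ : Type} [Fintype ι₁] [DecidableEq ι₁] [Fintype ι₂]
    [DecidableEq ι₂] [Fintype κ₁] [DecidableEq κ₁] [Fintype κ₂] [DecidableEq κ₂] [Fintype A₁]
    [Fintype A₂] (e₁ : κ₁ ⊕ A₁ ≃ ι₁) (e₂ : κ₂ ⊕ A₂ ≃ ι₂) {D₁ D₂ r₁ r₂ : ℕ}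
    {W₁ : Submodule ℂ (H fun _ : ι₁ ↦ D₁)} {W₂ : Submodule ℂ (H fun _ : ι₂ ↦ D₂)}
    (hW₁ : IsQMDS D₁ r₁ W₁) (hW₂ : IsQMDS D₂ r₂ W₂)
    (hK : Module.finrank ℂ W₁ = Module.finrank ℂ W₂) (hpos : W₁ ≠ ⊥)
    (hκ₁ : r₁ ≤ Fintype.card κ₁) (hκ₂ : r₂ ≤ Fintype.card κ₂)
    (hA : Fintype.card A₁ + Fintype.card A₂ ≤ r₁ + r₂ + 1) :
    ∃ W : Submodule ℂ (H (Sum.elim (fun _ : κ₁ ↦ D₁) fun _ : κ₂ ↦ D₂)),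
      IsUniformSubspace _ (min (Fintype.card κ₁ - r₁) (min (Fintype.card κ₂ - r₂)
        (r₁ + r₂ + 1 - Fintype.card A₁ - Fintype.card A₂))) W ∧
      Module.finrank ℂ W = D₁ ^ Fintype.card A₁ * D₂ ^ Fintype.card A₂ := by
  classical
  obtain ⟨Ψ, hΨ0, hΨ⟩ := exists_maxEntangled_dyad_mem hW₁ hW₂ hK hpos
  have hι₁ : Fintype.card ι₁ = Fintype.card κ₁ + Fintype.card A₁ := by
    rw [← Fintype.card_congr e₁, Fintype.card_sum]
  have hι₂ : Fintype.card ι₂ = Fintype.card κ₂ + Fintype.card A₂ := by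
    rw [← Fintype.card_congr e₂, Fintype.card_sum]
  have hdims : (fun k ↦ Sum.elim (fun _ : ι₁ ↦ D₁) (fun _ : ι₂ ↦ D₂)
      (sumParties e₁ e₂ (.inl k))) = Sum.elim (fun _ ↦ D₁) fun _ ↦ D₂ := by
    ext (k | k) <;> rfl
  have hcard : Fintype.card (Cfg fun a ↦ Sum.elim (fun _ : ι₁ ↦ D₁) (fun _ : ι₂ ↦ D₂)
      (sumParties e₁ e₂ (.inr a))) = D₁ ^ Fintype.card A₁ * D₂ ^ Fintype.card A₂ := by
    simp [sumParties]
  rw [← hcard, ← hdims]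
  refine exists_isUniformSubspace_of_dyad_mem hΨ0 ?_ fun S hS ↦ hΨ _ ?_ ?_ ?_
  · rw [Fintype.card_sum]
    omega
  · rw [toLeft_adjoinParties_sumParties, card_adjoinParties]
    have := S.card_toLeft_le
    omega
  · rw [toRight_adjoinParties_sumParties, card_adjoinParties]
    have := S.card_toRight_le
    omega
  · rw [card_adjoinParties, Fintype.card_sum]
    omega

open RUnif in
/-- Given two QMDS codes `((n₁, K, d₁))_{D₁}`, `((n₂, K, d₂))_{D₂}`
with common `K > 1` and `rᵢ = dᵢ - 1`, for all `0 ≤ α ≤ r₁`, `0 ≤ β ≤ r₂` there is an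
`l`-uniform subspace `W` of `(ℂ^{D₁})^{⊗(n₁-α)} ⊗ (ℂ^{D₂})^{⊗(n₂-β)}` with
`dim W = D₁^α D₂^β` and `l = min(n₁-r₁-α, n₂-r₂-β, r₁+r₂+1-α-β)`. -/
theorem statement9 (n1 n2 D1 D2 r1 r2 K : ℕ)
    (hQ1 : K = D1 ^ (n1 - 2 * r1)) (h1 : 2 * r1 ≤ n1)
    (hQ2 : K = D2 ^ (n2 - 2 * r2)) (h2 : 2 * r2 ≤ n2)
    (hK : 1 < K)
    (W1 : Submodule ℂ (H (fun _ : Fin n1 => D1)))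
    (hW1 : IsUniformSubspace (fun _ : Fin n1 => D1) r1 W1)
    (hdim1 : Module.finrank ℂ W1 = K)
    (W2 : Submodule ℂ (H (fun _ : Fin n2 => D2)))
    (hW2 : IsUniformSubspace (fun _ : Fin n2 => D2) r2 W2)
    (hdim2 : Module.finrank ℂ W2 = K) :
    ∀ α β : ℕ, α ≤ r1 → β ≤ r2 →
      ∃ W : Submodule ℂ
          (H (Sum.elim (fun _ : Fin (n1 - α) => D1) (fun _ : Fin (n2 - β) => D2))),
        IsUniformSubspace (Sum.elim (fun _ : Fin (n1 - α) => D1) (fun _ : Fin (n2 - β) => D2))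
          (min (n1 - r1 - α) (min (n2 - r2 - β) (r1 + r2 + 1 - α - β))) W ∧
        Module.finrank ℂ W = D1 ^ α * D2 ^ β := by
  intro α β hα hβ
  have hQMDS1 : IsQMDS D1 r1 W1 := ⟨by simpa using h1, hW1, by rw [hdim1, hQ1, Fintype.card_fin]⟩
  have hQMDS2 : IsQMDS D2 r2 W2 := ⟨by simpa using h2, hW2, by rw [hdim2, hQ2, Fintype.card_fin]⟩
  rw [Nat.sub_right_comm n1, Nat.sub_right_comm n2]
  simpa using statement9_general
    (finSumFinEquiv.trans (finCongr (Nat.sub_add_cancel (by omega : α ≤ n1))))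
    (finSumFinEquiv.trans (finCongr (Nat.sub_add_cancel (by omega : β ≤ n2))))
    hQMDS1 hQMDS2 (hdim1.trans hdim2.symm) (Submodule.one_le_finrank_iff.mp (by omega))
    (by rw [Fintype.card_fin]; omega) (by rw [Fintype.card_fin]; omega)
    (by rw [Fintype.card_fin, Fintype.card_fin]; omega)
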